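/- Let (F|K,P) be a valued function field (F|K a finitely generated field extension of transcendence degree ≥ 1 with a valuation P, not necessarily trivial on K) such that F|K is separable. Then there is a separating transcendence basis of F|K which contains elements x₁,…,x_ρ and y₁,…,y_τ such that v_Px₁,…,v_Px_ρ is a maximal set of elements of v_PF rationally independent modulo v_PK, and y₁P,…,y_τP form a transcendence basis of FP over KP. -/

import Mathlib

/-! Common valuation-theoretic notions, following F.-V. Kuhlmann,
"On local uniformization in arbitrary characteristic I".

A valued field `(F, P)` is modelled by a field `F` together with a
`ValuationSubring F` (the valuation ring `𝓞` of the place `P`). -/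

namespace LocalUnif

variable {F : Type*} [Field F]

/-- `x` lies in the maximal ideal of the valuation subring `O`,
i.e. the residue `xP` is `0` (equivalently `v_P x > 0`, or `x = 0`). -/
def InMax (O : ValuationSubring F) (x : F) : Prop := x = 0 ∨ x⁻¹ ∉ O

/-- `x` is a unit of the valuation subring `O`, i.e. `v_P x = 0`. -/
def IsVUnit (O : ValuationSubring F) (x : F) : Prop := x ≠ 0 ∧ x ∈ O ∧ x⁻¹ ∈ O

/-- The valuation with valuation ring `O` is trivial on the subfield `K`;
equivalently, every nonzero element of `K` is a unit of `O`. -/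
def TrivialOn (O : ValuationSubring F) (K : Subfield F) : Prop :=
  ∀ x ∈ K, x ∈ O ∧ x⁻¹ ∈ O

/-- The residue field of `O` equals (the isomorphic image of) the subfield `K`:
every element of `O` is congruent to an element of `K` modulo the maximal ideal.
(For a place `P` of `F|K` this says that `P` is a rational place, `FP = K`.) -/
def ResidueEq (O : ValuationSubring F) (K : Subfield F) : Prop :=
  ∀ x ∈ O, ∃ c ∈ K, InMax O (x - c)

/-- The residue field of `O` is algebraic over (the image of) `K`; for a place of
`F|K` this says that `P` is zero-dimensional. -/
def ResidueAlgebraic (O : ValuationSubring F) (K : Subfield F) : Prop :=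
  ∀ x ∈ O, ∃ p : Polynomial F, p ≠ 0 ∧ (∀ i, p.coeff i ∈ K) ∧ InMax O (Polynomial.eval x p)

/-- The values `v_P (x i)` are rationally independent modulo `v_P K`:
no nontrivial ℤ-linear combination of the values lies in `ℚ ⊗ v_P K`
(equivalently, in `v_P K`, by clearing denominators). -/
def ValIndepMod (O : ValuationSubring F) (K : Subfield F) {ρ : ℕ} (x : Fin ρ → F) : Prop :=
  (∀ i, x i ≠ 0) ∧
  ∀ e : Fin ρ → ℤ, (∃ c ∈ K, c ≠ 0 ∧ IsVUnit O ((∏ i, x i ^ e i) / c)) → e = 0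

/-- The residues `(y i)P` are algebraically independent over the residue field `KP`:
for every polynomial with coefficients in `𝓞_K = K ∩ O`, at least one of which is
a unit, the value of the polynomial at `y` is a unit (so its residue is nonzero). -/
def ResIndep (O : ValuationSubring F) (K : Subfield F) {τ : ℕ} (y : Fin τ → F) : Prop :=
  (∀ i, y i ∈ O) ∧
  ∀ p : MvPolynomial (Fin τ) F, (∀ m, p.coeff m ∈ K ∧ p.coeff m ∈ O) →
    (∃ m, IsVUnit O (p.coeff m)) → ¬ InMax O (MvPolynomial.eval y p)

/-- `dim_ℚ (ℚ ⊗ (v_P F / v_P K)) = ρ`: there is a maximal set of `ρ` elements of `F`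
whose values are rationally independent modulo `v_P K`. -/
def RatRankEq (O : ValuationSubring F) (K : Subfield F) (ρ : ℕ) : Prop :=
  (∃ x : Fin ρ → F, ValIndepMod O K x) ∧ ∀ x : Fin (ρ + 1) → F, ¬ ValIndepMod O K x

/-- `trdeg (FP | KP) = τ`: there is a maximal set of `τ` elements of `O` whose
residues are algebraically independent over `KP`. -/
def ResTrdegEq (O : ValuationSubring F) (K : Subfield F) (τ : ℕ) : Prop :=
  (∃ y : Fin τ → F, ResIndep O K y) ∧ ∀ y : Fin (τ + 1) → F, ¬ ResIndep O K y

/-- `trdeg (F | K) = d`. -/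
def TrdegEq (K : Subfield F) (d : ℕ) : Prop :=
  ∃ t : Fin d → F, IsTranscendenceBasis ↥K t

/-- `P` is an Abhyankar place of `F|K`:
`trdeg F|K = trdeg FP|K + dim_ℚ (ℚ ⊗ v_P F)`. -/
def IsAbhyankar (O : ValuationSubring F) (K : Subfield F) : Prop :=
  ∃ d ρ τ : ℕ, d = ρ + τ ∧ TrdegEq K d ∧ RatRankEq O K ρ ∧ ResTrdegEq O K τ

/-- The value group of `O` is archimedean ordered (rank at most 1):
for any two positive values `v_P a, v_P b` there is `n` with `n · v_P a ≥ v_P b`. -/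
def RankOne (O : ValuationSubring F) : Prop :=
  ∀ a b : F, a ≠ 0 → InMax O a → b ≠ 0 → InMax O b → ∃ n : ℕ, a ^ n / b ∈ O

/-- The value group of `O` has (rank) at least `r`: there is a chain of `r` positive
values, each infinitely larger than the previous one. -/
def RankAtLeast (O : ValuationSubring F) (r : ℕ) : Prop :=
  ∃ a : Fin r → F, (∀ i, a i ≠ 0 ∧ InMax O (a i)) ∧
    ∀ i j : Fin r, i < j → ∀ n : ℕ, a i ^ n / a j ∉ O

/-- The value group of `O` has rank exactly `r`. -/
def RankEq (O : ValuationSubring F) (r : ℕ) : Prop :=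
  RankAtLeast O r ∧ ¬ RankAtLeast O (r + 1)

/-- The valuation is discrete: its value group is order isomorphic to `ℤ`,
i.e. there is a uniformizer `π` with every value an integer multiple of `v_P π`. -/
def IsDiscrete (O : ValuationSubring F) : Prop :=
  ∃ π : F, π ≠ 0 ∧ InMax O π ∧ ∀ x : F, x ≠ 0 → ∃ n : ℤ, IsVUnit O (x / π ^ n)

/-- `F|K` is an algebraic function field: a finitely generated field extension of
transcendence degree at least 1. -/
def IsFunctionField (K : Subfield F) : Prop :=
  (∃ S : Finset F, IntermediateField.adjoin ↥K (S : Set F) = ⊤) ∧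
  ∃ x : F, Transcendental ↥K x

/-- The data of a weak uniformization of `(𝓛|𝓚, P)` (both subfields of an ambient
valued field `F`, `𝓚 ⊆ 𝓛`) with uniformizing transcendence basis `t` and generators
`η`: there are polynomials `f i` in `n` variables `X₁, …, Xₙ` with coefficients in
`𝓞_𝓚[t₁,…,tₛ]` such that (U1) `X j` does not occur in `f i` for `i < j`,
(U2) `f i (η) = 0`, and (U3) the residue of `det J_f (η)` is nonzero; moreover `t`
is a transcendence basis of `𝓛|𝓚` inside `𝓞_𝓛` and `𝓛 = 𝓚(t, η)`. -/
def UnifData (𝓛 𝓚 : Subfield F) (O : ValuationSubring F) {s n : ℕ}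
    (t : Fin s → F) (η : Fin n → F) : Prop :=
  (∀ i, t i ∈ 𝓛 ∧ t i ∈ O) ∧ (∀ i, η i ∈ 𝓛 ∧ η i ∈ O) ∧
  AlgebraicIndependent ↥𝓚 t ∧
  (∀ z ∈ 𝓛, IsAlgebraic ↥(IntermediateField.adjoin ↥𝓚 (Set.range t)) z) ∧
  Subfield.closure ((𝓚 : Set F) ∪ Set.range t ∪ Set.range η) = 𝓛 ∧
  ∃ f : Fin n → MvPolynomial (Fin n) F,
    (∀ i m, (f i).coeff m ∈
      Subring.closure ((↑(𝓚.toSubring ⊓ O.toSubring) : Set F) ∪ Set.range t)) ∧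
    (∀ i j : Fin n, (i : ℕ) < (j : ℕ) → MvPolynomial.degreeOf j (f i) = 0) ∧
    (∀ i, MvPolynomial.eval η (f i) = 0) ∧
    IsVUnit O (Matrix.det (Matrix.of fun i j : Fin n =>
      MvPolynomial.eval η (MvPolynomial.pderiv j (f i))))

/-- `(𝓛|𝓚, P)` is uniformizable with respect to `ζ₁, …, ζ_m`:
there is a weak uniformization whose generators `η` include all the `ζ k`. -/
def UnifWrt (𝓛 𝓚 : Subfield F) (O : ValuationSubring F) {m : ℕ} (ζ : Fin m → F) : Prop :=
  ∃ (s n : ℕ) (t : Fin s → F) (η : Fin n → F),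
    UnifData 𝓛 𝓚 O t η ∧ ∃ σ : Fin m → Fin n, ∀ k, η (σ k) = ζ k

/-- `(𝓛|𝓚, P)` is uniformizable: uniformizable with respect to every finite
list of elements of `𝓞_𝓛`. -/
def UnifIn (𝓛 𝓚 : Subfield F) (O : ValuationSubring F) : Prop :=
  ∀ (m : ℕ) (ζ : Fin m → F), (∀ k, ζ k ∈ 𝓛 ∧ ζ k ∈ O) → UnifWrt 𝓛 𝓚 O ζ

section Defectless

variable {K L : Type*} [Field K] [Field L]

/-- The values of the `a i` lie in pairwise distinct cosets modulo the value group of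
the ground field along `φ`; thus there are at least `e` distinct cosets. -/
def ValClassIndep (φ : K →+* L) (OL : ValuationSubring L) {e : ℕ} (a : Fin e → L) : Prop :=
  (∀ i, a i ≠ 0) ∧ ∀ i j : Fin e, i ≠ j →
    ¬ ∃ c : K, c ≠ 0 ∧ IsVUnit OL (a i / (a j * φ c))

/-- The ramification index `e = (v_P L : v_P K)` of `OL` over the ground field along `φ`. -/
def RamIdxEq (φ : K →+* L) (OL : ValuationSubring L) (e : ℕ) : Prop :=
  (∃ a : Fin e → L, ValClassIndep φ OL a) ∧ ∀ a : Fin (e + 1) → L, ¬ ValClassIndep φ OL a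

/-- The residues of the `b i` are linearly independent over the residue field of the
ground field along `φ`. -/
def ResLinIndep (φ : K →+* L) (OK : ValuationSubring K) (OL : ValuationSubring L)
    {f : ℕ} (b : Fin f → L) : Prop :=
  (∀ i, b i ∈ OL) ∧ ∀ c : Fin f → K, (∀ i, c i ∈ OK) → (∃ i, ¬ InMax OK (c i)) →
    ¬ InMax OL (∑ i, φ (c i) * b i)

/-- The inertia degree `f = [LP : KP]` of `OL` over `(K, OK)` along `φ`. -/
def InertiaDegEq (φ : K →+* L) (OK : ValuationSubring K) (OL : ValuationSubring L)
    (f : ℕ) : Prop :=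
  (∃ b : Fin f → L, ResLinIndep φ OK OL b) ∧ ∀ b : Fin (f + 1) → L, ¬ ResLinIndep φ OK OL b

end Defectless

/-- `(K, OK)` is a defectless (stable) valued field: for every finite extension `L|K`
(inside a fixed algebraic closure) the fundamental equality
`[L : K] = ∑ᵢ eᵢ fᵢ` holds, the sum running over all extensions of the valuation. -/
def IsDefectless (K : Type*) [Field K] (OK : ValuationSubring K) : Prop :=
  ∀ L : IntermediateField K (AlgebraicClosure K), FiniteDimensional K ↥L →
    ∃ (g : ℕ) (Os : Fin g → ValuationSubring ↥L) (e f : Fin g → ℕ),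
      Function.Injective Os ∧
      (∀ O' : ValuationSubring ↥L, O'.comap (algebraMap K ↥L) = OK ↔ ∃ i, O' = Os i) ∧
      (∀ i, RamIdxEq (algebraMap K ↥L) (Os i) (e i)) ∧
      (∀ i, InertiaDegEq (algebraMap K ↥L) OK (Os i) (f i)) ∧
      Module.finrank K ↥L = ∑ i, e i * f i

/-- The extension `𝓛|𝓚` of subfields of `F` is separable (in the general sense of
MacLane): every finitely generated subextension is separably generated, i.e. admits
a separating transcendence basis. -/
def IsSeparableExt (𝓚 𝓛 : Subfield F) : Prop :=
  ∀ S : Finset F, ↑S ⊆ (𝓛 : Set F) →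
    ∃ (d : ℕ) (u : Fin d → F), (∀ i, u i ∈ 𝓛) ∧ AlgebraicIndependent ↥𝓚 u ∧
      ∀ x ∈ Subfield.closure ((𝓚 : Set F) ∪ ↑S),
        IsSeparable ↥(IntermediateField.adjoin ↥𝓚 (Set.range u)) x

/-- The embedding of a subfield `K`, on which the valuation is trivial, into
the residue field of `O`. -/
noncomputable def resEmb (O : ValuationSubring F) (K : Subfield F) (h : ∀ x ∈ K, x ∈ O) :
    ↥K →+* IsLocalRing.ResidueField ↥O :=
  (IsLocalRing.residue ↥O).comp
    { toFun := fun x => (⟨x.1, h x.1 x.2⟩ : ↥O)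
      map_one' := rfl
      map_mul' := fun _ _ => rfl
      map_zero' := rfl
      map_add' := fun _ _ => rfl }

end LocalUnif


namespace LocalUnif

section Val
variable {F : Type*} [Field F]

theorem inMax_iff (O : ValuationSubring F) (x : F) : InMax O x ↔ O.valuation x < 1 := by
  unfold InMax
  rw [← O.valuation_le_one_iff, not_le, map_inv₀]
  by_cases hx : x = 0
  · simp [hx]
  · have : 0 < O.valuation x := by simpa [zero_lt_iff] using hx
    simp only [hx, false_or]
    exact one_lt_inv₀ this

theorem isVUnit_iff (O : ValuationSubring F) (x : F) : IsVUnit O x ↔ O.valuation x = 1 := by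
  unfold IsVUnit
  rw [← O.valuation_le_one_iff, ← O.valuation_le_one_iff, map_inv₀]
  constructor
  · rintro ⟨h0, h1, h2⟩
    have : 0 < O.valuation x := by simpa [zero_lt_iff] using h0
    exact le_antisymm h1 ((inv_le_one₀ this).1 h2)
  · intro h
    refine ⟨?_, h.le, by simp [h]⟩
    rintro rfl
    simp at h

theorem valIndepMod_iff (O : ValuationSubring F) (K : Subfield F) {ρ : ℕ} (x : Fin ρ → F) :
    ValIndepMod O K x ↔ (∀ i, x i ≠ 0) ∧ ∀ e : Fin ρ → ℤ,
      (∃ c ∈ K, c ≠ 0 ∧ ∏ i, O.valuation (x i) ^ e i = O.valuation c) → e = 0 := by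
  unfold ValIndepMod
  refine and_congr_right fun _ => forall_congr' fun e => imp_congr_left
    (exists_congr fun c => and_congr_right fun _ => and_congr_right fun hc => ?_)
  have : O.valuation c ≠ 0 := by simpa using hc
  rw [isVUnit_iff, map_div₀, div_eq_one_iff_eq this, map_prod]
  simp only [map_zpow₀]

theorem resIndep_aeval (O : ValuationSubring F) (K : Subfield F) {τ : ℕ} {y : Fin τ → F}
    (hy : ResIndep O K y) (q : MvPolynomial (Fin τ) K) (hq : q ≠ 0) :
    ∃ c ∈ K, c ≠ 0 ∧ O.valuation (MvPolynomial.aeval y q) = O.valuation c := by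
  obtain ⟨m0, hm0, hmax⟩ := Finset.exists_max_image q.support
    (fun m => O.valuation ((q.coeff m : K) : F)) (by simpa using hq)
  have hc : q.coeff m0 ≠ 0 := by simpa using hm0
  have hcF : ((q.coeff m0 : K) : F) ≠ 0 := by simpa using hc
  have hv : O.valuation ((q.coeff m0 : K) : F) ≠ 0 := by simpa using hc
  refine ⟨(q.coeff m0 : K), (q.coeff m0).2, hcF, ?_⟩
  set p : MvPolynomial (Fin τ) F :=
    MvPolynomial.map (algebraMap K F) (MvPolynomial.C (q.coeff m0)⁻¹ * q) with hp
  have hcoef : ∀ m, p.coeff m = ((q.coeff m0 : K) : F)⁻¹ * ((q.coeff m : K) : F) := by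
    intro m
    simp [hp, MvPolynomial.coeff_map, MvPolynomial.coeff_C_mul]
    rfl
  have hle : ∀ m, O.valuation (p.coeff m) ≤ 1 := by
    intro m
    rw [hcoef, map_mul, map_inv₀, inv_mul_le_iff₀ (zero_lt_iff.2 hv), mul_one]
    by_cases hm : m ∈ q.support
    · exact hmax m hm
    · simp at hm
      simp [hm]
  have hev : MvPolynomial.eval y p = ((q.coeff m0 : K) : F)⁻¹ * MvPolynomial.aeval y q := by
    rw [hp, MvPolynomial.eval_map]
    change MvPolynomial.aeval y _ = _
    rw [map_mul, MvPolynomial.aeval_C]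
    simp
    left
    rfl
  have h1 : ¬ O.valuation (MvPolynomial.eval y p) < 1 := by
    rw [← inMax_iff]
    refine hy.2 p (fun m => ⟨?_, ?_⟩) ⟨m0, ?_⟩
    · rw [hcoef]
      exact K.mul_mem (K.inv_mem (q.coeff m0).2) (q.coeff m).2
    · exact (O.valuation_le_one_iff _).1 (hle m)
    · rw [isVUnit_iff, hcoef, inv_mul_cancel₀ hcF, map_one]
  have h2 : O.valuation (MvPolynomial.eval y p) ≤ 1 := by
    rw [MvPolynomial.eval_eq]
    refine O.valuation.map_sum_le fun m _ => ?_
    rw [map_mul, map_prod]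
    refine mul_le_one' (hle m) (Finset.prod_le_one' fun i _ => ?_)
    rw [map_pow]
    exact pow_le_one₀ zero_le ((O.valuation_le_one_iff _).2 (hy.1 i))
  have h3 := le_antisymm h2 (not_lt.1 h1)
  rw [hev, map_mul, map_inv₀, inv_mul_eq_one₀ hv] at h3
  exact h3.symm

theorem resIndep_algInd (O : ValuationSubring F) (K : Subfield F) {τ : ℕ} {y : Fin τ → F}
    (hy : ResIndep O K y) : AlgebraicIndependent K y := by
  rw [algebraicIndependent_iff]
  intro p hp
  by_contra h
  obtain ⟨c, _, hc, hv⟩ := resIndep_aeval O K hy p h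
  rw [hp, map_zero] at hv
  exact hc ((map_eq_zero _).1 hv.symm)

theorem valIndep_algInd (O : ValuationSubring F) (K : Subfield F) {ρ : ℕ} {x : Fin ρ → F}
    (hx : ValIndepMod O K x) (A : Subalgebra K F)
    (hA : ∀ a ∈ A, a ≠ 0 → ∃ c ∈ K, c ≠ 0 ∧ O.valuation a = O.valuation c) :
    AlgebraicIndependent A x := by
  classical
  rw [valIndepMod_iff] at hx
  obtain ⟨hx0, hx⟩ := hx
  rw [algebraicIndependent_iff]
  intro p hp
  by_contra h
  have hterm : ∀ m ∈ p.support, ∃ c ∈ K, c ≠ 0 ∧ O.valuation (((p.coeff m : A) : F) * ∏ i, x i ^ m i)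
      = O.valuation c * ∏ i, O.valuation (x i) ^ m i := by
    intro m hm
    obtain ⟨c, hc, hc0, hv⟩ := hA (p.coeff m : A) (p.coeff m).2 (by simpa using hm)
    exact ⟨c, hc, hc0, by rw [map_mul, hv, map_prod]; simp only [map_pow]⟩
  obtain ⟨m0, hm0, hmax⟩ := Finset.exists_max_image p.support
    (fun m => O.valuation (((p.coeff m : A) : F) * ∏ i, x i ^ m i)) (by simpa using h)
  have hne : O.valuation (((p.coeff m0 : A) : F) * ∏ i, x i ^ m0 i) ≠ 0 := by
    have : p.coeff m0 ≠ 0 := by simpa using hm0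
    simp [Finset.prod_eq_zero_iff, this, hx0]
  have hlt : ∀ m ∈ p.support, m ≠ m0 → O.valuation (((p.coeff m : A) : F) * ∏ i, x i ^ m i) <
      O.valuation (((p.coeff m0 : A) : F) * ∏ i, x i ^ m0 i) := by
    intro m hm hmm
    refine lt_of_le_of_ne (hmax m hm) fun heq => hmm ?_
    obtain ⟨c, hc, hc0, hv⟩ := hterm m hm
    obtain ⟨c', hc', hc0', hv'⟩ := hterm m0 hm0
    have key := hx (fun i => (m i : ℤ) - m0 i) ⟨c' / c, K.div_mem hc' hc,
      div_ne_zero hc0' hc0, ?_⟩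
    · ext i
      have := congrFun key i
      simp at this
      omega
    · rw [hv, hv'] at heq
      have hx0' : ∀ i, O.valuation (x i) ≠ 0 := fun i => by simpa using hx0 i
      have h0 : ∏ i, O.valuation (x i) ^ m0 i ≠ 0 :=
        Finset.prod_ne_zero_iff.2 fun i _ => pow_ne_zero _ (hx0' i)
      have hcv : O.valuation c ≠ 0 := by simpa using hc0
      simp only [zpow_sub₀ (hx0' _), zpow_natCast, Finset.prod_div_distrib, map_div₀]
      rw [div_eq_div_iff h0 hcv, mul_comm, heq]
  have hsum : MvPolynomial.aeval x p = ∑ m ∈ p.support, ((p.coeff m : A) : F) * ∏ i, x i ^ m i := by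
    rw [MvPolynomial.aeval_def, MvPolynomial.eval₂_eq']
    rfl
  have := Valuation.map_sum_eq_of_lt O.valuation (s := p.support)
    (f := fun m => ((p.coeff m : A) : F) * ∏ i, x i ^ m i) hm0
    (fun m hm => hlt m (Finset.mem_sdiff.1 hm).1 (by simpa using (Finset.mem_sdiff.1 hm).2))
  rw [← hsum, hp, map_zero] at this
  exact hne this.symm

theorem sum_algInd (O : ValuationSubring F) (K : Subfield F) {ρ τ : ℕ} {x : Fin ρ → F}
    {y : Fin τ → F} (hx : ValIndepMod O K x) (hy : ResIndep O K y) :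
    AlgebraicIndependent K (Sum.elim x y) := by
  refine (resIndep_algInd O K hy).sumElim (valIndep_algInd O K hx _ ?_)
  intro a ha ha0
  rw [Algebra.adjoin_range_eq_range_aeval] at ha
  obtain ⟨q, rfl⟩ := ha
  refine resIndep_aeval O K hy q ?_
  rintro rfl
  simp at ha0

/-- perturbation: value independence -/
theorem valIndep_perturb (O : ValuationSubring F) (K : Subfield F) {ρ : ℕ} {x x' : Fin ρ → F}
    (hx : ValIndepMod O K x) (h : ∀ i, O.valuation (x' i - x i) < O.valuation (x i)) :
    ValIndepMod O K x' := by
  have hv : ∀ i, O.valuation (x' i) = O.valuation (x i) := fun i => by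
    have := Valuation.map_add_eq_of_lt_left O.valuation (h i)
    rwa [add_sub_cancel] at this
  rw [valIndepMod_iff] at hx ⊢
  refine ⟨fun i h0 => ?_, ?_⟩
  · have := hv i
    rw [h0, map_zero] at this
    exact hx.1 i ((map_eq_zero _).1 this.symm)
  · simpa only [hv] using hx.2

theorem resIndep_perturb (O : ValuationSubring F) (K : Subfield F) {τ : ℕ} {y y' : Fin τ → F}
    (hy : ResIndep O K y) (h : ∀ i, O.valuation (y' i - y i) < 1) :
    ResIndep O K y' := by
  have hO : ∀ i, y' i ∈ O := fun i => by
    have h1 : y' i - y i ∈ O := (O.valuation_le_one_iff _).1 (h i).le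
    simpa using O.add_mem _ _ h1 (hy.1 i)
  refine ⟨hO, fun p hp hu hm => hy.2 p hp hu ?_⟩
  rw [inMax_iff] at hm ⊢
  obtain ⟨P, rfl⟩ : ∃ P : MvPolynomial (Fin τ) O, MvPolynomial.map O.subtype P = p := by
    change p ∈ Set.range (MvPolynomial.map O.subtype)
    rw [MvPolynomial.mem_range_map_iff_coeffs_subset]
    intro c hc
    obtain ⟨m, _, rfl⟩ := MvPolynomial.mem_coeffs_iff.1 hc
    exact ⟨⟨_, (hp m).2⟩, rfl⟩
  have hev : ∀ z : Fin τ → O, MvPolynomial.eval (fun i => (z i : F))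
      (MvPolynomial.map O.subtype P) = (MvPolynomial.eval z P : O) := by
    intro z
    rw [MvPolynomial.eval_map]
    change _ = O.subtype (MvPolynomial.eval₂ (RingHom.id _) z P)
    rw [MvPolynomial.hom_eval₂]
    rfl
  have e1 := hev (fun i => ⟨y' i, hO i⟩)
  have e2 := hev (fun i => ⟨y i, hy.1 i⟩)
  simp only at e1 e2
  have e1 : O.valuation (MvPolynomial.eval (fun i => (⟨y' i, hO i⟩ : O)) P : O) < 1 := by
    rw [← e1]
    exact hm
  have e2' : O.valuation (MvPolynomial.eval (fun i => (⟨y i, hy.1 i⟩ : O)) P : O) < 1 := by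
    rw [← O.valuation_lt_one_iff, ← IsLocalRing.residue_eq_zero_iff] at e1 ⊢
    rw [← e1]
    change IsLocalRing.residue O (MvPolynomial.eval₂ (RingHom.id _) _ P) =
      IsLocalRing.residue O (MvPolynomial.eval₂ (RingHom.id _) _ P)
    rw [MvPolynomial.hom_eval₂, MvPolynomial.hom_eval₂]
    congr 1
    funext i
    refine (sub_eq_zero.1 ?_).symm
    rw [← map_sub, IsLocalRing.residue_eq_zero_iff, O.valuation_lt_one_iff]
    exact h i
  rw [← e2] at e2'
  exact e2'

end Val
end LocalUnif

namespace LocalUnif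

section Diff

theorem span_update {k V ι : Type*} [Field k] [AddCommGroup V] [Module k V] [Fintype ι]
    [DecidableEq ι] (e : ι → V) (he : Submodule.span k (Set.range e) = ⊤) (j : ι) (c : ι → k)
    (hc : c j ≠ 0) :
    Submodule.span k (Set.range (Function.update e j (∑ i, c i • e i))) = ⊤ := by
  set v := ∑ i, c i • e i with hv
  set N := Submodule.span k (Set.range (Function.update e j v)) with hN
  have hvN : v ∈ N := Submodule.subset_span ⟨j, by simp⟩
  have hi : ∀ i, i ≠ j → e i ∈ N := fun i hij => Submodule.subset_span ⟨i, by simp [hij]⟩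
  have hj : c j • e j ∈ N := by
    have : c j • e j = v - ∑ i ∈ Finset.univ.erase j, c i • e i := by
      rw [hv, ← Finset.add_sum_erase _ _ (Finset.mem_univ j)]
      simp
    rw [this]
    exact N.sub_mem hvN (N.sum_mem fun i h => N.smul_mem _ (hi i (Finset.ne_of_mem_erase h)))
  rw [eq_top_iff, ← he, Submodule.span_le]
  rintro _ ⟨i, rfl⟩
  by_cases hij : i = j
  · subst hij
    exact (N.smul_mem_iff hc).1 hj
  · exact hi i hij

open KaehlerDifferential

variable {K F : Type*} [Field K] [Field F] [Algebra K F]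

theorem deriv_zero_adjoin {M : Type*} [AddCommGroup M] [Module K M] [Module F M]
    [IsScalarTower K F M] (δ : Derivation K F M) (S : Set F) (h : ∀ s ∈ S, δ s = 0) :
    ∀ x ∈ IntermediateField.adjoin K S, δ x = 0 := by
  intro x hx
  induction hx using IntermediateField.adjoin_induction with
  | mem x hx => exact h x hx
  | algebraMap x => exact δ.map_algebraMap x
  | add x y _ _ hx hy => rw [map_add, hx, hy, add_zero]
  | inv x _ hx => rw [Derivation.leibniz_inv, hx, smul_zero]
  | mul x y _ _ hx hy => rw [Derivation.leibniz, hx, hy, smul_zero, smul_zero, add_zero]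

theorem span_of_separable (S : Set F) [Algebra.IsSeparable (IntermediateField.adjoin K S) F] :
    Submodule.span F (D K F '' S) = ⊤ := by
  set N := Submodule.span F (D K F '' S) with hN
  let L := IntermediateField.adjoin K S
  let δ : Derivation K F (Ω[F⁄K] ⧸ N) := N.mkQ.compDer (D K F)
  have hδ : ∀ x ∈ L, δ x = 0 := deriv_zero_adjoin δ S fun s hs => by
    change N.mkQ (D K F s) = 0
    rw [Submodule.mkQ_apply, Submodule.Quotient.mk_eq_zero]
    exact Submodule.subset_span ⟨s, hs, rfl⟩
  let f : F →ₗ[L] (Ω[F⁄K] ⧸ N) :=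
    { toFun := δ
      map_add' := map_add δ
      map_smul' := fun l x => by
        rw [RingHom.id_apply, Algebra.smul_def, Derivation.leibniz]
        have : δ (algebraMap L F l) = 0 := hδ _ l.2
        rw [this, smul_zero, add_zero, algebraMap_smul] }
  let δ' : Derivation L F (Ω[F⁄K] ⧸ N) := Derivation.mk' f (δ.leibniz)
  have : Algebra.FormallyUnramified L F := Algebra.FormallyUnramified.of_isSeparable L F
  have h0 : ∀ x, δ x = 0 := fun x => by
    change δ' x = 0
    rw [← Derivation.liftKaehlerDifferential_comp_D δ' x, Subsingleton.elim (D L F x) 0, map_zero]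
  rw [eq_top_iff, ← span_range_derivation, Submodule.span_le]
  rintro _ ⟨x, rfl⟩
  exact (Submodule.Quotient.mk_eq_zero _).1 (h0 x)

theorem separable_of_span [Algebra.EssFiniteType K F] (S : Set F)
    (h : Submodule.span F (D K F '' S) = ⊤) :
    Algebra.IsSeparable (IntermediateField.adjoin K S) F := by
  let L := IntermediateField.adjoin K S
  let δ : Derivation K F Ω[F⁄L] := (D L F).restrictScalars K
  have hz : δ.liftKaehlerDifferential = 0 := by
    rw [← LinearMap.ker_eq_top, eq_top_iff, ← h, Submodule.span_le]
    rintro _ ⟨s, hs, rfl⟩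
    change δ.liftKaehlerDifferential (D K F s) = 0
    rw [Derivation.liftKaehlerDifferential_comp_D]
    exact (D L F).map_algebraMap ⟨s, IntermediateField.subset_adjoin K S hs⟩
  have hD : ∀ x, D L F x = 0 := fun x => by
    change δ x = 0
    rw [← Derivation.liftKaehlerDifferential_comp_D δ x, hz, LinearMap.zero_apply]
  have hs : Subsingleton Ω[F⁄L] := by
    rw [← Submodule.subsingleton_iff F, ← subsingleton_iff_bot_eq_top, ← span_range_derivation,
      eq_comm, Submodule.span_eq_bot]
    rintro _ ⟨x, rfl⟩
    exact hD x
  have : Algebra.FormallyUnramified L F := ⟨hs⟩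
  have : Algebra.EssFiniteType L F := Algebra.EssFiniteType.of_comp K L F
  exact Algebra.FormallyUnramified.isSeparable L F

theorem exchange {ι : Type*} [Fintype ι] [DecidableEq ι] (p : ℕ) [CharP F p] (u : ι → F)
    (hu : Submodule.span F (Set.range fun i => D K F (u i)) = ⊤) (j : ι) (w a : F) (ha : a ≠ 0) :
    Submodule.span F (Set.range fun i => D K F (Function.update u j w i)) = ⊤ ∨
    Submodule.span F (Set.range fun i => D K F (Function.update u j (w + a ^ p * u j) i)) = ⊤ := by
  have hup : ∀ z, (fun i => D K F (Function.update u j z i)) =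
      Function.update (fun i => D K F (u i)) j (D K F z) := fun z => by
    funext i
    by_cases h : i = j
    · subst h; simp
    · simp [h]
  obtain ⟨c, hc⟩ := (Submodule.mem_span_range_iff_exists_fun F).1
    (hu ▸ Submodule.mem_top : D K F w ∈ Submodule.span F (Set.range fun i => D K F (u i)))
  by_cases hcj : c j = 0
  · right
    rw [hup]
    have := span_update (fun i => D K F (u i)) hu j (Function.update c j (a ^ p)) (by simp [ha])
    convert this using 5
    have hDa : D K F (a ^ p) = 0 := by
      rw [Derivation.leibniz_pow, ← Nat.cast_smul_eq_nsmul F, CharP.cast_eq_zero, zero_smul]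
    rw [map_add, Derivation.leibniz, hDa, smul_zero, add_zero, ← hc,
      ← Finset.add_sum_erase _ _ (Finset.mem_univ j),
      ← Finset.add_sum_erase _ (fun i => Function.update c j (a ^ p) i • D K F (u i))
        (Finset.mem_univ j), hcj, zero_smul, zero_add, add_comm, Function.update_self]
    congr 1
    refine Finset.sum_congr rfl fun i hi => ?_
    rw [Function.update_of_ne (Finset.ne_of_mem_erase hi)]
  · left
    rw [hup, ← hc]
    exact span_update _ hu j c hcj

theorem exchange_all {ι κ : Type*} [Fintype ι] [Finite κ] (p : ℕ) [CharP F p] (u : ι → F)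
    (hu : Submodule.span F (Set.range fun i => D K F (u i)) = ⊤) (f : κ ↪ ι) (w : κ → F)
    (G : κ → F → Prop) (hG : ∀ i, G i (w i))
    (hG' : ∀ i t, ∃ a : F, a ≠ 0 ∧ G i (w i + a ^ p * t)) :
    ∃ u' : ι → F, Submodule.span F (Set.range fun i => D K F (u' i)) = ⊤ ∧
      ∀ i, G i (u' (f i)) := by
  classical
  have := Fintype.ofFinite κ
  suffices h : ∀ s : Finset κ, ∃ u' : ι → F,
      Submodule.span F (Set.range fun i => D K F (u' i)) = ⊤ ∧ ∀ i ∈ s, G i (u' (f i)) by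
    obtain ⟨u', h1, h2⟩ := h Finset.univ
    exact ⟨u', h1, fun i => h2 i (Finset.mem_univ i)⟩
  intro s
  induction s using Finset.induction_on with
  | empty => exact ⟨u, hu, by simp⟩
  | insert i s his ih =>
    obtain ⟨u', h1, h2⟩ := ih
    obtain ⟨a, ha, haG⟩ := hG' i (u' (f i))
    have key : ∀ z, G i z → ∀ k ∈ insert i s, G k (Function.update u' (f i) z (f k)) := by
      intro z hz k hk
      by_cases hki : k = i
      · subst hki; simpa using hz
      · rw [Function.update_of_ne (fun h => hki (f.injective h))]
        exact h2 k (Finset.mem_of_mem_insert_of_ne hk hki)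
    rcases exchange p u' h1 (f i) (w i) a ha with h | h
    · exact ⟨_, h, key _ (hG i)⟩
    · exact ⟨_, h, key _ haG⟩

end Diff
end LocalUnif

namespace LocalUnif

section Main

theorem exists_max (P : ℕ → Prop) (d : ℕ) (h0 : P 0) (hd : ∀ n, P n → n ≤ d) :
    ∃ n, P n ∧ ¬ P (n + 1) := by
  by_contra! h
  have : ∀ n, P n := fun n => Nat.rec h0 (fun k hk => h k hk) n
  have := hd _ (this (d + 1))
  omega

theorem card_le_of_algInd {K F ι : Type*} [Field K] [Field F] [Algebra K F] {d : ℕ}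
    {u : Fin d → F} (hu : IsTranscendenceBasis K u) [Fintype ι] {w : ι → F}
    (hw : AlgebraicIndependent K w) : Fintype.card ι ≤ d := by
  have h1 := hu.lift_cardinalMk_eq_trdeg
  have h2 := hw.lift_cardinalMk_le_trdeg
  simp only [Cardinal.mk_fintype, Fintype.card_fin, Cardinal.lift_natCast] at h1 h2
  have h3 : Algebra.trdeg K F = d := by
    apply Cardinal.lift_injective
    rw [← h1, Cardinal.lift_natCast]
  rw [h3, Cardinal.lift_natCast] at h2
  exact_mod_cast h2

theorem extend_charZero {K F : Type*} [Field K] [Field F] [Algebra K F] [CharZero F] {d : ℕ}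
    {u : Fin d → F} (hu : IsTranscendenceBasis K u) {ι : Type*} {w : ι → F}
    (hw : AlgebraicIndependent K w) :
    ∃ u' : Fin d → F, AlgebraicIndependent K u' ∧
      (∀ x : F, IsSeparable (IntermediateField.adjoin K (Set.range u')) x) ∧
      ∃ g : ι ↪ Fin d, ∀ i, u' (g i) = w i := by
  obtain ⟨t, ht, hb⟩ := exists_isTranscendenceBasis_superset
    ((algebraicIndependent_subtype_range hw.injective).2 hw)
  obtain ⟨e⟩ : Nonempty (Fin d ≃ t) := Cardinal.lift_mk_eq'.1 (hu.lift_cardinalMk_eq hb)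
  have hr : Set.range (fun i => (e i : F)) = t := by
    ext z
    constructor
    · rintro ⟨i, rfl⟩
      exact (e i).2
    · intro hz
      exact ⟨e.symm ⟨z, hz⟩, by simp⟩
  refine ⟨fun i => e i, hb.1.comp e e.injective, ?_,
    ⟨fun i => e.symm ⟨w i, ht ⟨i, rfl⟩⟩, fun i j h => hw.injective (by simpa using h)⟩, ?_⟩
  · rw [hr]
    have := hb.isAlgebraic_field
    rw [Subtype.range_coe] at this
    intro x
    have hc : CharZero (IntermediateField.adjoin K t) :=
      (algebraMap (IntermediateField.adjoin K t) F).charZero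
    exact Algebra.IsSeparable.isSeparable (IntermediateField.adjoin K t) x
  · intro i
    change (e (e.symm _) : F) = _
    rw [Equiv.apply_symm_apply]

theorem extend_charP {K F : Type*} [Field K] [Field F] [Algebra K F] (p : ℕ) [CharP F p]
    [Algebra.EssFiniteType K F] {d : ℕ}
    {u : Fin d → F} (hu : IsTranscendenceBasis K u)
    (hsep : ∀ x : F, IsSeparable (IntermediateField.adjoin K (Set.range u)) x)
    {ι : Type*} [Fintype ι] {w : ι → F}
    (hw : AlgebraicIndependent K w)
    (G : ι → F → Prop) (hG : ∀ i, G i (w i))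
    (hG' : ∀ i t, ∃ a : F, a ≠ 0 ∧ G i (w i + a ^ p * t)) :
    ∃ u' : Fin d → F, AlgebraicIndependent K u' ∧
      (∀ x : F, IsSeparable (IntermediateField.adjoin K (Set.range u')) x) ∧
      ∃ g : ι ↪ Fin d, ∀ i, G i (u' (g i)) := by
  have hcard := card_le_of_algInd hu hw
  obtain ⟨g⟩ : Nonempty (ι ↪ Fin d) := Function.Embedding.nonempty_of_card_le (by simpa using hcard)
  have : Algebra.IsSeparable (IntermediateField.adjoin K (Set.range u)) F := ⟨hsep⟩
  have hspan := span_of_separable (K := K) (F := F) (Set.range u)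
  rw [← Set.range_comp] at hspan
  obtain ⟨u', h1, h2⟩ := exchange_all p u hspan g w G hG hG'
  have hs' : Algebra.IsSeparable (IntermediateField.adjoin K (Set.range u')) F := by
    apply separable_of_span
    rw [← Set.range_comp]
    exact h1
  refine ⟨u', ?_, fun x => hs'.isSeparable _ x, g, h2⟩
  have halg : Algebra.IsAlgebraic (Algebra.adjoin K (Set.range u')) F := by
    rw [← IntermediateField.isAlgebraic_adjoin_iff_top]
    infer_instance
  exact (Algebra.IsAlgebraic.isTranscendenceBasis_of_lift_le_trdeg_of_finite K u'
    hu.lift_cardinalMk_eq_trdeg.le).1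

theorem exists_small {F : Type*} [Field F] (O : ValuationSubring F) (p : ℕ) (hp : p ≠ 0) (b : F)
    (hb0 : b ≠ 0) (hb : O.valuation b < 1) (c : F) (hc : c ≠ 0) (t : F) :
    ∃ a : F, a ≠ 0 ∧ O.valuation (a ^ p * t) < O.valuation c := by
  have hcv : 0 < O.valuation c := by simpa [zero_lt_iff] using hc
  by_cases ht : t = 0
  · exact ⟨1, one_ne_zero, by simpa [ht] using hcv⟩
  have htv : 0 < O.valuation t := by simpa [zero_lt_iff] using ht
  suffices h : ∃ a : F, a ≠ 0 ∧ O.valuation a ≤ 1 ∧ O.valuation a < O.valuation (c / t) by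
    obtain ⟨a, ha0, ha1, ha⟩ := h
    refine ⟨a, ha0, ?_⟩
    rw [map_div₀, lt_div_iff₀ htv] at ha
    rw [map_mul, map_pow]
    exact lt_of_le_of_lt (mul_le_mul_left (pow_le_of_le_one zero_le ha1 hp) _) ha
  have hct : c / t ≠ 0 := div_ne_zero hc ht
  have hctv : 0 < O.valuation (c / t) := zero_lt_iff.2 ((map_ne_zero _).2 hct)
  rcases le_total 1 (O.valuation (c / t)) with h | h
  · exact ⟨b, hb0, hb.le, lt_of_lt_of_le hb h⟩
  · have : O.valuation (b * (c / t)) < O.valuation (c / t) := by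
      rw [map_mul]
      exact mul_lt_of_lt_one_left hctv hb
    exact ⟨b * (c / t), mul_ne_zero hb0 hct, this.le.trans h, this⟩

end Main
end LocalUnif

open LocalUnif in
/-- Lemma 2.12 of the paper. Let `(F|K, P)` be a valued function
field (the valuation not necessarily trivial on `K`) with `F|K` separable. Then
there is a separating transcendence basis `u` of `F|K` containing elements
`x₁,…,x_ρ` (given by an injection `σ`) whose values form a maximal set of elements
of `v_P F` rationally independent modulo `v_P K`, and elements `y₁,…,y_τ` (given by
an injection `θ`, disjoint from `σ`) whose residues form a transcendence basis of
`FP` over `KP`. -/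
theorem statement_18
    (F : Type*) [Field F] (K : Subfield F) (O : ValuationSubring F)
    (hfg : ∃ S : Finset F, IntermediateField.adjoin ↥K (S : Set F) = ⊤)
    (htr : ∃ x : F, Transcendental ↥K x)
    (hsep : IsSeparableExt K ⊤) :
    ∃ (d : ℕ) (u : Fin d → F),
      -- `u` is a separating transcendence basis of `F|K`
      AlgebraicIndependent ↥K u ∧
      (∀ x : F, IsSeparable ↥(IntermediateField.adjoin ↥K (Set.range u)) x) ∧
      ∃ (ρ τ : ℕ) (σ : Fin ρ → Fin d) (θ : Fin τ → Fin d),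
        Function.Injective σ ∧ Function.Injective θ ∧ (∀ i j, σ i ≠ θ j) ∧
        -- the values of the `u (σ i)` are a maximal rationally independent set
        -- modulo `v_P K`
        ValIndepMod O K (u ∘ σ) ∧ (∀ x' : Fin (ρ + 1) → F, ¬ ValIndepMod O K x') ∧
        -- the residues of the `u (θ i)` form a transcendence basis of `FP|KP`
        ResIndep O K (u ∘ θ) ∧ (∀ y' : Fin (τ + 1) → F, ¬ ResIndep O K y') := by
  classical
  obtain ⟨S, hS⟩ := hfg
  have hess : Algebra.EssFiniteType K F := IntermediateField.fg_top_iff.1 ⟨S, hS⟩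
  obtain ⟨d, u, -, hui, husep⟩ := hsep S (by simp)
  have husep : ∀ x : F, IsSeparable (IntermediateField.adjoin K (Set.range u)) x := by
    intro x
    apply husep
    have hx : x ∈ IntermediateField.adjoin K (S : Set F) := hS ▸ IntermediateField.mem_top
    induction hx using IntermediateField.adjoin_induction with
    | mem x hx => exact Subfield.subset_closure (Or.inr hx)
    | algebraMap x => exact Subfield.subset_closure (Or.inl x.2)
    | add x y _ _ hx hy => exact add_mem hx hy
    | inv x _ hx => exact inv_mem hx
    | mul x y _ _ hx hy => exact mul_mem hx hy
  have hub : IsTranscendenceBasis K u := by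
    have : Algebra.IsSeparable (IntermediateField.adjoin K (Set.range u)) F := ⟨husep⟩
    rw [hui.isTranscendenceBasis_iff_isAlgebraic, ← IntermediateField.isAlgebraic_adjoin_iff_top]
    infer_instance
  have hV : ∀ n, (∃ x : Fin n → F, ValIndepMod O K x) → n ≤ d := by
    rintro n ⟨x, hx⟩
    have hy : ResIndep O K (Fin.elim0 : Fin 0 → F) := by
      refine ⟨fun i => i.elim0, ?_⟩
      rintro p hp ⟨m, hm⟩
      obtain rfl : m = 0 := Subsingleton.elim _ _
      rw [MvPolynomial.eq_C_of_isEmpty p, MvPolynomial.eval_C, inMax_iff, not_lt]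
      rw [isVUnit_iff] at hm
      exact hm.ge
    simpa using card_le_of_algInd hub (sum_algInd O K hx hy)
  have hR : ∀ n, (∃ y : Fin n → F, ResIndep O K y) → n ≤ d := by
    rintro n ⟨y, hy⟩
    simpa using card_le_of_algInd hub (resIndep_algInd O K hy)
  by_cases hO : ∃ b : F, b ≠ 0 ∧ O.valuation b < 1
  swap
  · have hO : ∀ b : F, b ≠ 0 → O.valuation b = 1 := by
      intro b hb
      push Not at hO
      refine le_antisymm ?_ (hO b hb)
      have := hO b⁻¹ (inv_ne_zero hb)
      rw [map_inv₀] at this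
      exact (one_le_inv₀ (zero_lt_iff.2 ((map_ne_zero _).2 hb))).1 this
    refine ⟨d, u, hui, husep, 0, d, Fin.elim0, id, fun i => i.elim0, Function.injective_id,
      fun i => i.elim0, ⟨fun i => i.elim0, fun e _ => Subsingleton.elim _ _⟩, ?_, ⟨?_, ?_⟩, ?_⟩
    · intro x hx
      rw [valIndepMod_iff] at hx
      have := hx.2 (fun _ => 1) ⟨1, K.one_mem, one_ne_zero, by simp [hO _ (hx.1 _)]⟩
      simpa using congrFun this 0
    · intro i
      rw [← O.valuation_le_one_iff]
      by_cases h : (u ∘ id) i = 0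
      · rw [h, map_zero]; exact zero_le
      · exact (hO _ h).le
    · rintro p hp ⟨m, hm⟩ hmax
      obtain ⟨P, rfl⟩ : ∃ P : MvPolynomial (Fin d) K, MvPolynomial.map K.subtype P = p := by
        change p ∈ Set.range (MvPolynomial.map K.subtype)
        rw [MvPolynomial.mem_range_map_iff_coeffs_subset]
        intro c hc
        obtain ⟨m, _, rfl⟩ := MvPolynomial.mem_coeffs_iff.1 hc
        exact ⟨⟨_, (hp m).1⟩, rfl⟩
      rw [inMax_iff] at hmax
      have h0 : MvPolynomial.eval (u ∘ id) (MvPolynomial.map K.subtype P) = 0 := by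
        by_contra h
        exact hmax.ne (hO _ h)
      rw [MvPolynomial.eval_map] at h0
      have := (algebraicIndependent_iff.1 hui) P h0
      rw [this, map_zero, MvPolynomial.coeff_zero] at hm
      exact hm.1 rfl
    · intro y hy
      have := hR _ ⟨y, hy⟩
      omega
  obtain ⟨b, hb0, hb⟩ := hO
  obtain ⟨ρ, ⟨x, hx⟩, hρ⟩ := exists_max (fun n => ∃ x : Fin n → F, ValIndepMod O K x) d
    ⟨Fin.elim0, fun i => i.elim0, fun e _ => Subsingleton.elim _ _⟩ hV
  obtain ⟨τ, ⟨y, hy⟩, hτ⟩ := exists_max (fun n => ∃ x : Fin n → F, ResIndep O K x) d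
    ⟨Fin.elim0, by
      refine ⟨fun i => i.elim0, ?_⟩
      rintro p hp ⟨m, hm⟩
      obtain rfl : m = 0 := Subsingleton.elim _ _
      rw [MvPolynomial.eq_C_of_isEmpty p, MvPolynomial.eval_C, inMax_iff, not_lt]
      rw [isVUnit_iff] at hm
      exact hm.ge⟩ hR
  have hw := sum_algInd O K hx hy
  let c : Fin ρ ⊕ Fin τ → F := Sum.elim x (fun _ => 1)
  have hc : ∀ i, c i ≠ 0 := by
    rintro (i | i)
    · exact hx.1 i
    · exact one_ne_zero
  have key : ∃ u' : Fin d → F, AlgebraicIndependent K u' ∧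
      (∀ x : F, IsSeparable (IntermediateField.adjoin K (Set.range u')) x) ∧
      ∃ g : (Fin ρ ⊕ Fin τ) ↪ Fin d, ∀ i,
        O.valuation (u' (g i) - Sum.elim x y i) < O.valuation (c i) := by
    obtain ⟨p, hp⟩ := CharP.exists F
    rcases eq_or_ne p 0 with rfl | hp0
    · have : CharZero F := CharP.charP_to_charZero F
      obtain ⟨u', h1, h2, g, h3⟩ := extend_charZero hub hw
      refine ⟨u', h1, h2, g, fun i => ?_⟩
      rw [h3, sub_self, map_zero, zero_lt_iff]
      exact (map_ne_zero _).2 (hc i)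
    · refine extend_charP p hub husep hw
        (fun i z => O.valuation (z - Sum.elim x y i) < O.valuation (c i)) ?_ ?_
      · intro i
        rw [sub_self, map_zero, zero_lt_iff]
        exact (map_ne_zero _).2 (hc i)
      · intro i t
        obtain ⟨a, ha, h⟩ := exists_small O p hp0 b hb0 hb (c i) (hc i) t
        exact ⟨a, ha, by rwa [add_sub_cancel_left]⟩
  obtain ⟨u', h1, h2, g, h3⟩ := key
  refine ⟨d, u', h1, h2, ρ, τ, g ∘ Sum.inl, g ∘ Sum.inr, g.injective.comp Sum.inl_injective,
    g.injective.comp Sum.inr_injective, fun i j h => by simpa using g.injective h, ?_,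
    fun x' h => hρ ⟨x', h⟩, ?_, fun y' h => hτ ⟨y', h⟩⟩
  · exact valIndep_perturb O K hx fun i => h3 (Sum.inl i)
  · exact resIndep_perturb O K hy fun i => by simpa [c] using h3 (Sum.inr i)
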